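/- The series identity ∑_{n≥1} (−1/2^10)^n · ((1)_n)^5 / ((1/2)_n)^5 · [ (351 − 1755n + 2240n²)/n^10 − (11 H_n^{(5)} − H_{2n}^{(5)})(205n² − 160n + 32)/n^5 ] = −4 ζ(5,3) − π^8/4725 holds, where ζ(5,3) := ∑_{m>k≥1} 1/(m^5 k^3). -/

import Mathlib

/-- The rising factorial (Pochhammer symbol) `(a)ₙ = a(a+1)⋯(a+n-1)`. -/
noncomputable def risingFactorial (a : ℝ) (n : ℕ) : ℝ :=
  ∏ i ∈ Finset.range n, (a + i)

/-- The generalized harmonic number `H_n^{(s)} = ∑_{k=1}^n 1/k^s`. -/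
noncomputable def genHarmonic (s n : ℕ) : ℝ :=
  ∑ k ∈ Finset.range n, 1 / ((k : ℝ) + 1) ^ s

/-- The depth-two multiple zeta value `ζ(5,3) = ∑_{m>k≥1} 1/(m^5 k^3)`. -/
noncomputable def zeta53 : ℝ :=
  ∑' m : ℕ, (1 / ((m : ℝ) + 1) ^ 5) * ∑ k ∈ Finset.range m, 1 / ((k : ℝ) + 1) ^ 3

open Filter Topology
open scoped Nat

/-- A polynomial `c₀₀ + c₁₀ δ + c₀₁ q + c₁₁ δ q` in `ℝ[δ, q] / (δ², q²)`. -/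
structure BiDual where
  c₀₀ : ℝ
  c₁₀ : ℝ
  c₀₁ : ℝ
  c₁₁ : ℝ

/-- Multiplication modulo `δ²` and `q²`. -/
def BiDual.mul (r s : BiDual) : BiDual where
  c₀₀ := r.c₀₀ * s.c₀₀
  c₁₀ := r.c₀₀ * s.c₁₀ + r.c₁₀ * s.c₀₀
  c₀₁ := r.c₀₀ * s.c₀₁ + r.c₀₁ * s.c₀₀
  c₁₁ := r.c₀₀ * s.c₁₁ + r.c₁₁ * s.c₀₀ + r.c₁₀ * s.c₀₁ + r.c₀₁ * s.c₁₀

/-- The coefficient of `δ q` in `r * exp (a δ + b q + c δ q)`. -/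
def BiDual.expCoeff (r : BiDual) (a b c : ℝ) : ℝ :=
  r.c₀₀ * (c + a * b) + r.c₁₀ * b + r.c₀₁ * a + r.c₁₁

/-- `T⁴ + m δ T³ - q`. -/
def quarticFactor (m T : ℝ) : BiDual := ⟨T ^ 4, m * T ^ 3, -1, 0⟩

/-- `T - δ`. -/
def linearFactor (T : ℝ) : BiDual := ⟨T, -1, 0, 0⟩

/-- `∏_{i<j} (T + w_i + w_j)` where the `w_i` are the roots of `T⁴ + δ T³ - q`. -/
def sexticFactor (T : ℝ) : BiDual := ⟨T ^ 6, -3 * T ^ 5, 4 * T ^ 2, -4 * T⟩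

theorem expCoeff_mul_quarticFactor (r : BiDual) (a b c m : ℝ) {T : ℝ} (hT : T ≠ 0) :
    (r.mul (quarticFactor m T)).expCoeff a b c =
      T ^ 4 * r.expCoeff (a + m / T) (b - 1 / T ^ 4) (c + m / T ^ 5) := by
  simp only [BiDual.mul, BiDual.expCoeff, quarticFactor]
  field_simp
  ring

theorem expCoeff_mul_linearFactor (r : BiDual) (a b c : ℝ) {T : ℝ} (hT : T ≠ 0) :
    (r.mul (linearFactor T)).expCoeff a b c = T * r.expCoeff (a - 1 / T) b c := by
  simp only [BiDual.mul, BiDual.expCoeff, linearFactor]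
  field_simp
  ring

theorem expCoeff_mul_sexticFactor (r : BiDual) (a b c : ℝ) {T : ℝ} (hT : T ≠ 0) :
    (r.mul (sexticFactor T)).expCoeff a b c =
      T ^ 6 * r.expCoeff (a - 3 / T) (b + 4 / T ^ 4) (c + 8 / T ^ 5) := by
  simp only [BiDual.mul, BiDual.expCoeff, sexticFactor]
  field_simp
  ring

theorem genHarmonic_succ (s n : ℕ) :
    genHarmonic s (n + 1) = genHarmonic s n + 1 / ((n : ℝ) + 1) ^ s :=
  Finset.sum_range_succ _ _

/-- The linear-order logarithm of the hypergeometric product, in `δ`. -/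
noncomputable def logδ (n s d e : ℕ) : ℝ :=
  3 * genHarmonic 1 s - 3 * genHarmonic 1 n - genHarmonic 1 d + genHarmonic 1 e

/-- The linear-order logarithm of the hypergeometric product, in `q`. -/
noncomputable def logq (n s d : ℕ) : ℝ :=
  4 * genHarmonic 4 n - genHarmonic 4 s + genHarmonic 4 d

/-- The coefficient of `δ q` in the logarithm of the hypergeometric product. -/
noncomputable def logδq (n s d : ℕ) : ℝ :=
  8 * genHarmonic 5 n + 3 * genHarmonic 5 s - genHarmonic 5 d

/-- The coefficient of `δ q` in `r` times the perturbation of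
`(-1)ⁿ n!⁶ s!⁴ / (d!⁴ e!)`. -/
noncomputable def pertTerm (r : BiDual) (n s d e : ℕ) : ℝ :=
  (-1) ^ n * (n ! : ℝ) ^ 6 * (s ! : ℝ) ^ 4 / ((d ! : ℝ) ^ 4 * (e ! : ℝ)) *
    r.expCoeff (logδ n s d e) (logq n s d) (logδq n s d)

theorem pertTerm_succ_n (r : BiDual) (n s d e : ℕ) :
    pertTerm r (n + 1) s d e = -pertTerm (r.mul (sexticFactor (n + 1))) n s d e := by
  have h : (n : ℝ) + 1 ≠ 0 := by positivity
  rw [pertTerm, pertTerm, expCoeff_mul_sexticFactor _ _ _ _ h, Nat.factorial_succ,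
    show logδ (n + 1) s d e = logδ n s d e - 3 / ((n : ℝ) + 1) by
      simp only [logδ, genHarmonic_succ]; ring,
    show logq (n + 1) s d = logq n s d + 4 / ((n : ℝ) + 1) ^ 4 by
      simp only [logq, genHarmonic_succ]; ring,
    show logδq (n + 1) s d = logδq n s d + 8 / ((n : ℝ) + 1) ^ 5 by
      simp only [logδq, genHarmonic_succ]; ring]
  push_cast
  ring

theorem pertTerm_succ_s (r : BiDual) (n s d e : ℕ) :
    pertTerm r n (s + 1) d e = pertTerm (r.mul (quarticFactor 3 (s + 1))) n s d e := by
  have h : (s : ℝ) + 1 ≠ 0 := by positivity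
  rw [pertTerm, pertTerm, expCoeff_mul_quarticFactor _ _ _ _ _ h, Nat.factorial_succ,
    show logδ n (s + 1) d e = logδ n s d e + 3 / ((s : ℝ) + 1) by
      simp only [logδ, genHarmonic_succ]; ring,
    show logq n (s + 1) d = logq n s d - 1 / ((s : ℝ) + 1) ^ 4 by
      simp only [logq, genHarmonic_succ]; ring,
    show logδq n (s + 1) d = logδq n s d + 3 / ((s : ℝ) + 1) ^ 5 by
      simp only [logδq, genHarmonic_succ]; ring]
  push_cast
  ring

theorem pertTerm_eq_succ_d (r : BiDual) (n s d e : ℕ) :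
    pertTerm r n s d e = pertTerm (r.mul (quarticFactor 1 (d + 1))) n s (d + 1) e := by
  have h : (d : ℝ) + 1 ≠ 0 := by positivity
  have hd : (d ! : ℝ) ≠ 0 := by positivity
  have he : (e ! : ℝ) ≠ 0 := by positivity
  rw [pertTerm, pertTerm, expCoeff_mul_quarticFactor _ _ _ _ _ h, Nat.factorial_succ,
    show logδ n s (d + 1) e + 1 / ((d : ℝ) + 1) = logδ n s d e by
      simp only [logδ, genHarmonic_succ]; ring,
    show logq n s (d + 1) - 1 / ((d : ℝ) + 1) ^ 4 = logq n s d by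
      simp only [logq, genHarmonic_succ]; ring,
    show logδq n s (d + 1) + 1 / ((d : ℝ) + 1) ^ 5 = logδq n s d by
      simp only [logδq, genHarmonic_succ]; ring]
  push_cast
  field_simp

theorem pertTerm_eq_succ_e (r : BiDual) (n s d e : ℕ) :
    pertTerm r n s d e = pertTerm (r.mul (linearFactor (e + 1))) n s d (e + 1) := by
  have h : (e : ℝ) + 1 ≠ 0 := by positivity
  have hd : (d ! : ℝ) ≠ 0 := by positivity
  have he : (e ! : ℝ) ≠ 0 := by positivity
  rw [pertTerm, pertTerm, expCoeff_mul_linearFactor _ _ _ _ h, Nat.factorial_succ,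
    show logδ n s d (e + 1) - 1 / ((e : ℝ) + 1) = logδ n s d e by
      simp only [logδ, genHarmonic_succ]; ring]
  push_cast
  field_simp

/-- The coefficient polynomial `3n + 2k + 2 + δ` of the summand in `k`. -/
def kernelPoly (n k : ℝ) : BiDual := ⟨3 * n + 2 * k + 2, 1, 0, 0⟩

/-- The certificate polynomial, in terms of `N = n + 1` and `k`. -/
def certPoly (N k : ℝ) : BiDual where
  c₀₀ := N * (2 * (k + 2 * N) ^ 4 - 160 * N ^ 5 - 384 * N ^ 4 * k - 368 * N ^ 3 * k ^ 2
    - 176 * N ^ 2 * k ^ 3 - 42 * N * k ^ 4 - 4 * k ^ 5 + 205 * N ^ 6 + 574 * N ^ 5 * k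
    + 664 * N ^ 4 * k ^ 2 + 408 * N ^ 3 * k ^ 3 + 141 * N ^ 2 * k ^ 4 + 26 * N * k ^ 5
    + 2 * k ^ 6)
  c₁₀ := k * (-(k + 2 * N) ^ 3 + 40 * N ^ 4 + 76 * N ^ 3 * k + 54 * N ^ 2 * k ^ 2
    + 17 * N * k ^ 3 + 2 * k ^ 4 - 62 * N ^ 5 - 130 * N ^ 4 * k - 111 * N ^ 3 * k ^ 2
    - 49 * N ^ 2 * k ^ 3 - 11 * N * k ^ 4 - k ^ 5)
  c₀₁ := N * (-2 * (k - 1) ^ 2 + 10 * N - 18 * N * k - 25 * N ^ 2)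
  c₁₁ := (k - 1) ^ 2 - 5 * N + 13 * N * k + 15 * N ^ 2

/-- The summand in `k`. -/
noncomputable def wzF (n k : ℕ) : ℝ :=
  pertTerm (kernelPoly n k) n (n + k) (2 * n + k + 1) (2 * n)

/-- The companion of `wzF`. -/
noncomputable def wzG (n k : ℕ) : ℝ :=
  pertTerm (certPoly (n + 1) k) n (n + k) (2 * n + k + 2) (2 * n + 2)

theorem wzF_sub_wzF (n k : ℕ) :
    wzF (n + 1) k - wzF n k = wzG n (k + 1) - wzG n k := by
  have h₁ : wzF (n + 1) k = pertTerm (kernelPoly (n + 1 : ℕ) k) (n + 1) (n + k + 1)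
      (2 * n + k + 3) (2 * n + 2) := by
    rw [wzF]; congr 1 <;> ring
  have h₂ : wzG n (k + 1) = pertTerm (certPoly (n + 1) (k + 1 : ℕ)) n (n + k + 1)
      (2 * n + k + 3) (2 * n + 2) := by
    rw [wzG]; congr 1
  rw [h₁, h₂, wzF, wzG, pertTerm_succ_n, pertTerm_succ_s, pertTerm_succ_s,
    pertTerm_eq_succ_d _ n (n + k) (2 * n + k + 1), pertTerm_eq_succ_d _ n (n + k) (2 * n + k + 2),
    pertTerm_eq_succ_d _ n (n + k) (2 * n + k + 2), pertTerm_eq_succ_e _ n _ _ (2 * n),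
    pertTerm_eq_succ_e _ n _ _ (2 * n + 1)]
  simp only [pertTerm]
  generalize logδ _ _ _ _ = a
  generalize logq _ _ _ = b
  generalize logδq _ _ _ = c
  rw [← mul_neg, ← mul_sub, ← mul_sub]
  congr 1
  simp only [BiDual.mul, BiDual.expCoeff, kernelPoly, certPoly, quarticFactor, linearFactor,
    sexticFactor]
  push_cast
  ring

theorem genHarmonic_zero (s : ℕ) : genHarmonic s 0 = 0 := Finset.sum_range_zero _

theorem genHarmonic_nonneg (s n : ℕ) : 0 ≤ genHarmonic s n :=
  Finset.sum_nonneg fun _ _ => by positivity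

theorem genHarmonic_le_self (s n : ℕ) : genHarmonic s n ≤ n := by
  induction n with
  | zero => simp [genHarmonic_zero]
  | succ n ih =>
    rw [genHarmonic_succ]
    have : 1 / ((n : ℝ) + 1) ^ s ≤ 1 :=
      div_le_one_of_le₀ (one_le_pow₀ (by linarith [n.cast_nonneg (α := ℝ)])) (by positivity)
    push_cast
    linarith

theorem genHarmonic_le_two {s : ℕ} (hs : 2 ≤ s) (n : ℕ) : genHarmonic s n ≤ 2 := by
  have key : ∀ m : ℕ, genHarmonic s (m + 1) ≤ 2 - 1 / ((m : ℝ) + 1) := by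
    intro m
    induction m with
    | zero => norm_num [genHarmonic_succ, genHarmonic_zero]
    | succ m ih =>
      rw [genHarmonic_succ]
      have h₁ : 1 / (((m + 1 : ℕ) : ℝ) + 1) ^ s ≤ 1 / (((m + 1 : ℕ) : ℝ) + 1) ^ 2 := by
        gcongr
        push_cast
        linarith [m.cast_nonneg (α := ℝ)]
      have h₂ : 1 / (((m + 1 : ℕ) : ℝ) + 1) ^ 2 ≤
          1 / ((m : ℝ) + 1) - 1 / (((m + 1 : ℕ) : ℝ) + 1) := by
        push_cast
        rw [div_sub_div _ _ (by positivity) (by positivity),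
          div_le_div_iff₀ (by positivity) (by positivity)]
        nlinarith [m.cast_nonneg (α := ℝ)]
      linarith
  cases n with
  | zero => simp [genHarmonic_zero]
  | succ n => exact (key n).trans (by linarith [show 0 ≤ 1 / ((n : ℝ) + 1) by positivity])

/-- The summand of the double zeta value `ζ(s,t) = ∑_{m>k≥1} 1/(m^s k^t)`. -/
noncomputable def doubleZetaTerm (s t m : ℕ) : ℝ :=
  1 / ((m : ℝ) + 1) ^ s * genHarmonic t m

/-- The double zeta value `ζ(s,t) = ∑_{m>k≥1} 1/(m^s k^t)`. -/
noncomputable def doubleZeta (s t : ℕ) : ℝ := ∑' m, doubleZetaTerm s t m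

theorem summable_one_div_succ_pow {s : ℕ} (hs : 2 ≤ s) :
    Summable fun m : ℕ => 1 / ((m : ℝ) + 1) ^ s := by
  have := (summable_nat_add_iff 1).2 (Real.summable_one_div_nat_pow.2 (show 1 < s by omega))
  simpa using this

theorem summable_doubleZetaTerm {s t : ℕ} (hs : 2 ≤ s) (ht : 2 ≤ t) :
    Summable (doubleZetaTerm s t) := by
  refine ((summable_one_div_succ_pow hs).mul_right 2).of_nonneg_of_le (fun m => ?_) fun m => ?_
  · exact mul_nonneg (by positivity) (genHarmonic_nonneg _ _)
  · exact mul_le_mul_of_nonneg_left (genHarmonic_le_two ht m) (by positivity)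

theorem summable_doubleZetaTerm_of_three_le {s : ℕ} (hs : 3 ≤ s) (t : ℕ) :
    Summable (doubleZetaTerm s t) := by
  obtain ⟨r, rfl⟩ := Nat.exists_eq_add_of_le hs
  refine (summable_one_div_succ_pow (show 2 ≤ 2 + r by omega)).of_nonneg_of_le (fun m => ?_)
    fun m => ?_
  · exact mul_nonneg (by positivity) (genHarmonic_nonneg _ _)
  · have h : genHarmonic t m ≤ m + 1 := (genHarmonic_le_self t m).trans (by linarith)
    calc doubleZetaTerm (3 + r) t m ≤ 1 / ((m : ℝ) + 1) ^ (3 + r) * (m + 1) :=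
          mul_le_mul_of_nonneg_left h (by positivity)
      _ = 1 / ((m : ℝ) + 1) ^ (2 + r) := by
          rw [show 3 + r = (2 + r) + 1 by omega, pow_succ]
          field_simp

theorem genHarmonic_mul_genHarmonic (s t M : ℕ) :
    genHarmonic s M * genHarmonic t M =
      ∑ m ∈ Finset.range M, (doubleZetaTerm s t m + doubleZetaTerm t s m) +
        genHarmonic (s + t) M := by
  induction M with
  | zero => simp [genHarmonic_zero]
  | succ M ih =>
    rw [Finset.sum_range_succ, genHarmonic_succ, genHarmonic_succ, genHarmonic_succ]
    have h : 1 / ((M : ℝ) + 1) ^ (s + t) = 1 / ((M : ℝ) + 1) ^ s * (1 / ((M : ℝ) + 1) ^ t) := by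
      rw [pow_add]
      field_simp
    rw [h]
    simp only [doubleZetaTerm] at ih ⊢
    linear_combination ih

/-- The stuffle product of two zeta values. -/
theorem doubleZeta_stuffle {s t : ℕ} {x y z : ℝ} (hs : 2 ≤ s) (ht : 2 ≤ t)
    (hx : Tendsto (genHarmonic s) atTop (𝓝 x)) (hy : Tendsto (genHarmonic t) atTop (𝓝 y))
    (hz : Tendsto (genHarmonic (s + t)) atTop (𝓝 z)) :
    x * y = doubleZeta s t + doubleZeta t s + z := by
  have h := (((summable_doubleZetaTerm hs ht).hasSum.add
    (summable_doubleZetaTerm ht hs).hasSum).tendsto_sum_nat).add hz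
  refine tendsto_nhds_unique (hx.mul hy) (h.congr fun M => ?_)
  exact (genHarmonic_mul_genHarmonic s t M).symm

/-- The error term in the finite form of the sum formula of weight eight. -/
noncomputable def sumFormulaError (M : ℕ) : ℝ :=
  ∑ k ∈ Finset.range M, 1 / ((k : ℝ) + 1) ^ 7 * (genHarmonic 1 M - genHarmonic 1 (M - 1 - k))

theorem genHarmonic_one_add_sub_le (r j : ℕ) :
    genHarmonic 1 (r + j) - genHarmonic 1 r ≤ j / ((r : ℝ) + 1) := by
  induction j with
  | zero => simp
  | succ j ih =>
    rw [← add_assoc, genHarmonic_succ]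
    have : 1 / (((r + j : ℕ) : ℝ) + 1) ^ 1 ≤ 1 / ((r : ℝ) + 1) := by
      rw [pow_one]
      gcongr
      omega
    push_cast at this ⊢
    rw [add_div]
    linarith

theorem genHarmonic_one_mono {m n : ℕ} (h : m ≤ n) : genHarmonic 1 m ≤ genHarmonic 1 n :=
  Finset.sum_le_sum_of_subset_of_nonneg (by simpa using h) fun _ _ _ => by positivity

theorem sumFormulaError_nonneg (M : ℕ) : 0 ≤ sumFormulaError M :=
  Finset.sum_nonneg fun k _ => mul_nonneg (by positivity)
    (sub_nonneg.2 (genHarmonic_one_mono (by omega)))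

theorem sumFormulaError_le (M : ℕ) : sumFormulaError M ≤ 2 / M := by
  calc sumFormulaError M ≤ ∑ k ∈ Finset.range M, 1 / ((k : ℝ) + 1) ^ 5 * (1 / M) := by
        refine Finset.sum_le_sum fun k hk => ?_
        obtain ⟨r, rfl⟩ := Nat.exists_eq_add_of_lt (Finset.mem_range.1 hk)
        have h := genHarmonic_one_add_sub_le r (k + 1)
        rw [show k + r + 1 - 1 - k = r by omega, show k + r + 1 = r + (k + 1) by omega]
        calc _ ≤ 1 / ((k : ℝ) + 1) ^ 7 * (((k + 1 : ℕ) : ℝ) / ((r : ℝ) + 1)) := by gcongr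
          _ = 1 / ((k : ℝ) + 1) ^ 5 * (1 / ((k + 1) * (r + 1))) := by
            push_cast
            field_simp
          _ ≤ _ := by
            gcongr
            push_cast
            nlinarith [k.cast_nonneg (α := ℝ), r.cast_nonneg (α := ℝ),
              mul_nonneg (k.cast_nonneg (α := ℝ)) (r.cast_nonneg (α := ℝ))]
    _ = genHarmonic 5 M * (1 / M) := by rw [← Finset.sum_mul, genHarmonic]
    _ ≤ 2 * (1 / M) := by
        gcongr
        exact genHarmonic_le_two (by norm_num) M
    _ = 2 / M := by ring

theorem tendsto_sumFormulaError : Tendsto sumFormulaError atTop (𝓝 0) :=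
  squeeze_zero sumFormulaError_nonneg sumFormulaError_le
    (tendsto_const_div_atTop_nhds_zero_nat 2)

theorem sumFormulaError_succ_sub (M : ℕ) :
    sumFormulaError (M + 1) - sumFormulaError M = 1 / ((M : ℝ) + 1) ^ 7 * genHarmonic 1 (M + 1) +
      ∑ k ∈ Finset.range M, 1 / ((k : ℝ) + 1) ^ 7 * (1 / ((M : ℝ) + 1) - 1 / ((M : ℝ) - k)) := by
  rw [sumFormulaError, Finset.sum_range_succ, sumFormulaError, add_sub_right_comm,
    ← Finset.sum_sub_distrib, add_comm]
  congr 1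
  · simp [genHarmonic_zero]
  · refine Finset.sum_congr rfl fun k hk => ?_
    obtain ⟨r, rfl⟩ := Nat.exists_eq_add_of_lt (Finset.mem_range.1 hk)
    rw [show k + r + 1 - 1 - k = r by omega, show k + r + 1 + 1 - 1 - k = r + 1 by omega,
      genHarmonic_succ 1 (k + r + 1), genHarmonic_succ 1 r]
    push_cast
    ring

theorem sum_range_one_div_sub (M : ℕ) :
    ∑ k ∈ Finset.range M, 1 / ((M : ℝ) - k) = genHarmonic 1 M := by
  rw [genHarmonic, ← Finset.sum_range_reflect]
  refine Finset.sum_congr rfl fun k hk => ?_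
  obtain ⟨r, rfl⟩ := Nat.exists_eq_add_of_lt (Finset.mem_range.1 hk)
  rw [show k + r + 1 - 1 - k = r by omega]
  push_cast
  ring

theorem sum_doubleZetaTerm_weight_eight (M : ℕ) :
    ∑ m ∈ Finset.range M, (doubleZetaTerm 2 6 m + doubleZetaTerm 3 5 m + doubleZetaTerm 4 4 m +
      doubleZetaTerm 5 3 m + doubleZetaTerm 6 2 m + doubleZetaTerm 7 1 m) =
      genHarmonic 8 M - sumFormulaError M := by
  induction M with
  | zero => simp [genHarmonic_zero, sumFormulaError]
  | succ M ih =>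
    have hE := sumFormulaError_succ_sub M
    have hH := sum_range_one_div_sub M
    have key : doubleZetaTerm 2 6 M + doubleZetaTerm 3 5 M + doubleZetaTerm 4 4 M +
        doubleZetaTerm 5 3 M + doubleZetaTerm 6 2 M + doubleZetaTerm 7 1 M =
        -(∑ k ∈ Finset.range M, 1 / ((k : ℝ) + 1) ^ 7 *
          (1 / ((M : ℝ) + 1) - 1 / ((M : ℝ) - k))) -
        1 / ((M : ℝ) + 1) ^ 7 * ∑ k ∈ Finset.range M, 1 / ((M : ℝ) - k) := by
      simp only [doubleZetaTerm, genHarmonic, Finset.mul_sum, ← Finset.sum_add_distrib,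
        ← Finset.sum_neg_distrib, ← Finset.sum_sub_distrib]
      refine Finset.sum_congr rfl fun k hk => ?_
      have h₁ : (M : ℝ) - k ≠ 0 :=
        (sub_pos.2 (Nat.cast_lt.2 (Finset.mem_range.1 hk))).ne'
      have h₂ : (M : ℝ) + 1 ≠ 0 := by positivity
      have h₃ : (k : ℝ) + 1 ≠ 0 := by positivity
      field_simp
      ring
    rw [Finset.sum_range_succ, ih, key, hH, genHarmonic_succ 8]
    rw [genHarmonic_succ 1] at hE
    have h₂ : 1 / ((M : ℝ) + 1) ^ 8 = 1 / ((M : ℝ) + 1) ^ 7 * (1 / ((M : ℝ) + 1) ^ 1) := by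
      field_simp
    rw [h₂]
    linear_combination hE

/-- The sum formula for double zeta values of weight eight. -/
theorem doubleZeta_sum_formula {z : ℝ} (hz : Tendsto (genHarmonic 8) atTop (𝓝 z)) :
    doubleZeta 2 6 + doubleZeta 3 5 + doubleZeta 4 4 + doubleZeta 5 3 + doubleZeta 6 2 +
      doubleZeta 7 1 = z := by
  have h₂ := (summable_doubleZetaTerm (s := 2) (t := 6) (by norm_num) (by norm_num)).hasSum
  have h := ((((h₂.add
    (summable_doubleZetaTerm_of_three_le (s := 3) (by norm_num) 5).hasSum).add
    (summable_doubleZetaTerm_of_three_le (s := 4) (by norm_num) 4).hasSum).add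
    (summable_doubleZetaTerm_of_three_le (s := 5) (by norm_num) 3).hasSum).add
    (summable_doubleZetaTerm_of_three_le (s := 6) (by norm_num) 2).hasSum).add
    (summable_doubleZetaTerm_of_three_le (s := 7) (by norm_num) 1).hasSum
  refine tendsto_nhds_unique h.tendsto_sum_nat ?_
  have := hz.sub tendsto_sumFormulaError
  rw [sub_zero] at this
  exact this.congr fun M => (sum_doubleZetaTerm_weight_eight M).symm

theorem tendsto_genHarmonic_of_hasSum {s : ℕ} {x : ℝ} (hs : s ≠ 0)
    (h : HasSum (fun n : ℕ => 1 / (n : ℝ) ^ s) x) : Tendsto (genHarmonic s) atTop (𝓝 x) := by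
  have h' := ((hasSum_nat_add_iff' 1).2 h).tendsto_sum_nat
  refine Tendsto.congr (fun n => ?_) (by simpa [hs] using h')
  simp [genHarmonic]

theorem bernoulli'_six : bernoulli' 6 = 1 / 42 := by
  have h₅ := bernoulli'_eq_zero_of_odd (n := 5) (by decide) (by norm_num)
  have c₂ : Nat.choose 6 2 = 15 := by decide
  have c₄ : Nat.choose 6 4 = 15 := by decide
  rw [bernoulli'_def]
  norm_num [Finset.sum_range_succ, c₂, c₄, h₅]

theorem bernoulli'_eight : bernoulli' 8 = -1 / 30 := by
  have h₅ := bernoulli'_eq_zero_of_odd (n := 5) (by decide) (by norm_num)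
  have h₇ := bernoulli'_eq_zero_of_odd (n := 7) (by decide) (by norm_num)
  have c₂ : Nat.choose 8 2 = 28 := by decide
  have c₄ : Nat.choose 8 4 = 70 := by decide
  have c₆ : Nat.choose 8 6 = 28 := by decide
  rw [bernoulli'_def]
  norm_num [Finset.sum_range_succ, c₂, c₄, c₆, bernoulli'_six, h₅, h₇]

theorem tendsto_genHarmonic_six : Tendsto (genHarmonic 6) atTop (𝓝 (Real.pi ^ 6 / 945)) := by
  refine tendsto_genHarmonic_of_hasSum (by norm_num) ?_
  convert hasSum_zeta_nat (k := 3) (by norm_num) using 1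
  rw [bernoulli_eq_bernoulli'_of_ne_one (by norm_num), show 2 * 3 = 6 by norm_num, bernoulli'_six]
  norm_num [Nat.factorial]
  ring

theorem tendsto_genHarmonic_eight : Tendsto (genHarmonic 8) atTop (𝓝 (Real.pi ^ 8 / 9450)) := by
  refine tendsto_genHarmonic_of_hasSum (by norm_num) ?_
  convert hasSum_zeta_nat (k := 4) (by norm_num) using 1
  rw [bernoulli_eq_bernoulli'_of_ne_one (by norm_num), show 2 * 4 = 8 by norm_num,
    bernoulli'_eight]
  norm_num [Nat.factorial]
  ring

/-- The double zeta values of weight eight with odd arguments sum to `ζ(8) / 4`. -/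
theorem doubleZeta_odd_sum :
    doubleZeta 3 5 + doubleZeta 5 3 + doubleZeta 7 1 = Real.pi ^ 8 / 37800 := by
  have h₂ := tendsto_genHarmonic_of_hasSum (by norm_num) hasSum_zeta_two
  have h₄ := tendsto_genHarmonic_of_hasSum (by norm_num) hasSum_zeta_four
  have h₆ := tendsto_genHarmonic_six
  have h₈ := tendsto_genHarmonic_eight
  have e₁ := doubleZeta_stuffle (s := 2) (t := 6) (by norm_num) (by norm_num) h₂ h₆ h₈
  have e₂ := doubleZeta_stuffle (s := 4) (t := 4) (by norm_num) (by norm_num) h₄ h₄ h₈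
  have e₃ := doubleZeta_sum_formula h₈
  linear_combination e₃ + e₁ + e₂ / 2

theorem abs_logδ_le (n s d e : ℕ) : |logδ n s d e| ≤ 3 * s + 3 * n + d + e := by
  have h₁ := genHarmonic_nonneg 1
  have h₂ := genHarmonic_le_self 1
  rw [logδ, abs_le]
  constructor <;> linarith [h₁ n, h₁ s, h₁ d, h₁ e, h₂ n, h₂ s, h₂ d, h₂ e]

theorem abs_logq_le (n s d : ℕ) : |logq n s d| ≤ 12 := by
  have h₁ := genHarmonic_nonneg 4
  have h₂ := genHarmonic_le_two (s := 4) (by norm_num)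
  rw [logq, abs_le]
  constructor <;> linarith [h₁ n, h₁ s, h₁ d, h₂ n, h₂ s, h₂ d]

theorem abs_logδq_le (n s d : ℕ) : |logδq n s d| ≤ 24 := by
  have h₁ := genHarmonic_nonneg 5
  have h₂ := genHarmonic_le_two (s := 5) (by norm_num)
  rw [logδq, abs_le]
  constructor <;> linarith [h₁ n, h₁ s, h₁ d, h₂ n, h₂ s, h₂ d]

theorem abs_expCoeff_le (r : BiDual) (a b c : ℝ) :
    |r.expCoeff a b c| ≤
      |r.c₀₀| * (|c| + |a| * |b|) + |r.c₁₀| * |b| + |r.c₀₁| * |a| + |r.c₁₁| := by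
  rw [BiDual.expCoeff]
  refine (abs_add_le _ _).trans (add_le_add ?_ le_rfl)
  refine (abs_add_le _ _).trans (add_le_add ?_ (abs_mul _ _).le)
  refine (abs_add_le _ _).trans (add_le_add ?_ (abs_mul _ _).le)
  rw [abs_mul, ← abs_mul a b]
  gcongr
  exact abs_add_le _ _

theorem abs_pertTerm (r : BiDual) (n s d e : ℕ) :
    |pertTerm r n s d e| = (n ! : ℝ) ^ 6 * (s ! : ℝ) ^ 4 / ((d ! : ℝ) ^ 4 * (e ! : ℝ)) *
      |r.expCoeff (logδ n s d e) (logq n s d) (logδq n s d)| := by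
  rw [pertTerm, abs_mul, abs_div, abs_mul, abs_mul, abs_neg_one_pow, one_mul,
    abs_of_nonneg (by positivity : (0 : ℝ) ≤ (n ! : ℝ) ^ 6),
    abs_of_nonneg (by positivity : (0 : ℝ) ≤ (s ! : ℝ) ^ 4),
    abs_of_nonneg (by positivity : (0 : ℝ) ≤ (d ! : ℝ) ^ 4 * (e ! : ℝ))]

theorem two_pow_mul_factorial_sq_le (n : ℕ) : 2 ^ n * n ! ^ 2 ≤ (2 * n)! := by
  induction n with
  | zero => simp
  | succ n ih =>
    rw [show 2 * (n + 1) = 2 * n + 1 + 1 by ring, Nat.factorial_succ, Nat.factorial_succ,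
      Nat.factorial_succ]
    calc 2 ^ (n + 1) * ((n + 1) * n !) ^ 2 = (n + 1) * (2 * n + 2) * (2 ^ n * n ! ^ 2) := by ring
      _ ≤ (2 * n + 1) * (2 * n + 2) * (2 * n)! := by gcongr; omega
      _ = _ := by ring

theorem factorial_mul_factorial_le (n k : ℕ) :
    (n ! : ℝ) * ((n + k)! : ℝ) ≤ ((2 * n + k)! : ℝ) := by
  have := Nat.le_of_dvd (Nat.factorial_pos _)
    (Nat.factorial_mul_factorial_dvd_factorial_add n (n + k))
  rw [← add_assoc, ← two_mul] at this
  exact_mod_cast this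

theorem abs_wzF_le (n k : ℕ) : |wzF n k| ≤ 180 * (1 / 2) ^ n * (1 / ((k : ℝ) + 1) ^ 2) := by
  have hn := n.cast_nonneg (α := ℝ)
  have hk := k.cast_nonneg (α := ℝ)
  set X : ℝ := 2 * n + k + 1 with hX
  have hX1 : 1 ≤ X := by linarith
  have hbase : (n ! : ℝ) ^ 6 * ((n + k)! : ℝ) ^ 4 /
      (((2 * n + k + 1)! : ℝ) ^ 4 * ((2 * n)! : ℝ)) ≤ (1 / 2) ^ n * (1 / X ^ 4) := by
    have h₁ := factorial_mul_factorial_le n k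
    have h₂ : (2 : ℝ) ^ n * (n ! : ℝ) ^ 2 ≤ ((2 * n)! : ℝ) := by
      exact_mod_cast two_pow_mul_factorial_sq_le n
    rw [one_div_pow, one_div_mul_one_div,
      div_le_div_iff₀ (by positivity) (by positivity), Nat.factorial_succ]
    push_cast
    rw [← hX]
    calc (n ! : ℝ) ^ 6 * ((n + k)! : ℝ) ^ 4 * (2 ^ n * X ^ 4)
        = X ^ 4 * ((n ! : ℝ) * ((n + k)! : ℝ)) ^ 4 * (2 ^ n * (n ! : ℝ) ^ 2) := by ring
      _ ≤ X ^ 4 * ((2 * n + k)! : ℝ) ^ 4 * ((2 * n)! : ℝ) := by gcongr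
      _ = _ := by ring
  have hcoeff : |(kernelPoly n k).expCoeff (logδ n (n + k) (2 * n + k + 1) (2 * n))
      (logq n (n + k) (2 * n + k + 1)) (logδq n (n + k) (2 * n + k + 1))| ≤ 180 * X ^ 2 := by
    have ha : |logδ n (n + k) (2 * n + k + 1) (2 * n)| ≤ 5 * X := by
      refine (abs_logδ_le _ _ _ _).trans ?_
      push_cast
      linarith
    refine (abs_expCoeff_le _ _ _ _).trans ?_
    have h₀ : |3 * (n : ℝ) + 2 * k + 2| ≤ 2 * X := by
      rw [abs_of_nonneg (by positivity)]
      linarith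
    simp only [kernelPoly, abs_one, abs_zero, one_mul, zero_mul, add_zero]
    calc _ ≤ 2 * X * (24 + 5 * X * 12) + 12 := by
          gcongr
          exacts [abs_logδq_le _ _ _, abs_logq_le _ _ _, abs_logq_le _ _ _]
      _ ≤ 180 * X ^ 2 := by nlinarith
  rw [wzF, abs_pertTerm]
  calc _ ≤ (1 / 2) ^ n * (1 / X ^ 4) * (180 * X ^ 2) := by gcongr
    _ = 180 * (1 / 2) ^ n * (1 / X ^ 2) := by field_simp
    _ ≤ _ := by
      gcongr
      linarith

theorem abs_certPoly_le {n k : ℝ} (hn : 0 ≤ n) (hk : 0 ≤ k) :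
    |(certPoly (n + 1) k).c₀₀| ≤ 10 * (n + 1) * (k + 2 * (n + 1)) ^ 6 ∧
    |(certPoly (n + 1) k).c₁₀| ≤ 10 * (n + 1) * (k + 2 * (n + 1)) ^ 6 ∧
    |(certPoly (n + 1) k).c₀₁| ≤ 10 * (n + 1) * (k + 2 * (n + 1)) ^ 6 ∧
    |(certPoly (n + 1) k).c₁₁| ≤ 10 * (n + 1) * (k + 2 * (n + 1)) ^ 6 := by
  simp only [certPoly, abs_le]
  refine ⟨⟨?_, ?_⟩, ⟨?_, ?_⟩, ⟨?_, ?_⟩, ?_, ?_⟩ <;> rw [← sub_nonneg] <;> ring_nf <;> positivity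

theorem abs_wzG_le (n k : ℕ) :
    |wzG n k| ≤ 16320 * (n + 1) * (n ! : ℝ) ^ 2 * (1 / ((k : ℝ) + 1)) := by
  have hn := n.cast_nonneg (α := ℝ)
  have hk := k.cast_nonneg (α := ℝ)
  obtain ⟨h₀₀, h₁₀, h₀₁, h₁₁⟩ := abs_certPoly_le hn hk
  set X : ℝ := k + 2 * (n + 1) with hX
  have hX1 : 2 ≤ X := by linarith
  have hbase : (n ! : ℝ) ^ 6 * ((n + k)! : ℝ) ^ 4 /
      (((2 * n + k + 2)! : ℝ) ^ 4 * ((2 * n + 2)! : ℝ)) ≤ 16 * (n ! : ℝ) ^ 2 * (1 / X ^ 8) := by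
    have h₁ := factorial_mul_factorial_le n k
    have h₂ : (1 : ℝ) ≤ ((2 * n + 2)! : ℝ) := by
      exact_mod_cast Nat.one_le_iff_ne_zero.2 (Nat.factorial_ne_zero _)
    rw [mul_one_div, div_le_div_iff₀ (by positivity) (by positivity), Nat.factorial_succ,
      Nat.factorial_succ (2 * n + k)]
    push_cast
    have hXX : X ^ 8 ≤ 16 * (X * (X - 1)) ^ 4 := by
      have : X ^ 2 ≤ 2 * (X * (X - 1)) := by nlinarith
      calc X ^ 8 = (X ^ 2) ^ 4 := by ring
        _ ≤ (2 * (X * (X - 1))) ^ 4 := by gcongr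
        _ = _ := by ring
    calc (n ! : ℝ) ^ 6 * ((n + k)! : ℝ) ^ 4 * X ^ 8
        = X ^ 8 * ((n ! : ℝ) * ((n + k)! : ℝ)) ^ 4 * (n ! : ℝ) ^ 2 * 1 := by ring
      _ ≤ 16 * (X * (X - 1)) ^ 4 * ((2 * n + k)! : ℝ) ^ 4 * (n ! : ℝ) ^ 2 *
          ((2 * n + 2)! : ℝ) := by gcongr
      _ = _ := by rw [hX]; ring
  have hcoeff : |(certPoly (n + 1) k).expCoeff (logδ n (n + k) (2 * n + k + 2) (2 * n + 2))
      (logq n (n + k) (2 * n + k + 2)) (logδq n (n + k) (2 * n + k + 2))| ≤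
      1020 * (n + 1) * X ^ 7 := by
    have ha : |logδ n (n + k) (2 * n + k + 2) (2 * n + 2)| ≤ 5 * X := by
      refine (abs_logδ_le _ _ _ _).trans ?_
      push_cast
      linarith
    have hb := abs_logq_le n (n + k) (2 * n + k + 2)
    have hc := abs_logδq_le n (n + k) (2 * n + k + 2)
    refine (abs_expCoeff_le _ _ _ _).trans ?_
    calc _ ≤ 10 * (n + 1) * X ^ 6 * (24 + 5 * X * 12) + 10 * (n + 1) * X ^ 6 * 12 +
          10 * (n + 1) * X ^ 6 * (5 * X) + 10 * (n + 1) * X ^ 6 := by gcongr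
      _ = 10 * (n + 1) * X ^ 6 * (37 + 65 * X) := by ring
      _ ≤ 10 * (n + 1) * X ^ 6 * (102 * X) := by gcongr; linarith
      _ = 1020 * (n + 1) * X ^ 7 := by ring
  rw [wzG, abs_pertTerm]
  calc _ ≤ 16 * (n ! : ℝ) ^ 2 * (1 / X ^ 8) * (1020 * (n + 1) * X ^ 7) := by gcongr
    _ = 16320 * (n + 1) * (n ! : ℝ) ^ 2 * (1 / X) := by field_simp; norm_num
    _ ≤ _ := by
      gcongr
      linarith

theorem tendsto_wzG (n : ℕ) : Tendsto (wzG n) atTop (𝓝 0) := by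
  refine squeeze_zero_norm (fun k => abs_wzG_le n k) ?_
  simpa using (tendsto_one_div_add_atTop_nhds_zero_nat (𝕜 := ℝ)).const_mul
    (16320 * ((n : ℝ) + 1) * (n ! : ℝ) ^ 2)

theorem summable_wzF (n : ℕ) : Summable (wzF n) :=
  .of_norm_bounded ((summable_one_div_succ_pow le_rfl).mul_left _) fun k => abs_wzF_le n k

theorem tsum_wzF_sub (n : ℕ) : ∑' k, wzF n k - ∑' k, wzF (n + 1) k = wzG n 0 := by
  have h₁ := ((summable_wzF n).hasSum.sub (summable_wzF (n + 1)).hasSum).tendsto_sum_nat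
  have h₂ := (tendsto_wzG n).const_sub (wzG n 0)
  rw [sub_zero] at h₂
  refine tendsto_nhds_unique h₁ (h₂.congr fun K => ?_)
  rw [← Finset.sum_range_sub']
  exact Finset.sum_congr rfl fun k _ => by linarith [wzF_sub_wzF n k]

theorem exists_abs_tsum_wzF_le : ∃ C, ∀ n, |∑' k, wzF n k| ≤ C * (1 / 2) ^ n := by
  refine ⟨180 * ∑' k : ℕ, 1 / ((k : ℝ) + 1) ^ 2, fun n => ?_⟩
  rw [mul_right_comm]
  exact tsum_of_norm_bounded (f := wzF n)
    ((summable_one_div_succ_pow le_rfl).hasSum.mul_left (180 * (1 / 2 : ℝ) ^ n)) (abs_wzF_le n)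

theorem hasSum_wzG : HasSum (fun n => wzG n 0) (∑' k, wzF 0 k) := by
  obtain ⟨C, hC⟩ := exists_abs_tsum_wzF_le
  have hgeom := summable_geometric_two.mul_left C
  have hsum : Summable fun n => ∑' k, wzF n k := .of_norm_bounded hgeom hC
  have hG : Summable fun n => wzG n 0 :=
    (hsum.sub ((summable_nat_add_iff 1).2 hsum)).congr tsum_wzF_sub
  refine hG.hasSum_iff_tendsto_nat.2 ?_
  have h := hsum.tendsto_atTop_zero.const_sub (∑' k, wzF 0 k)
  rw [sub_zero] at h
  refine h.congr fun M => ?_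
  rw [← Finset.sum_range_sub' fun n => ∑' k, wzF n k]
  exact Finset.sum_congr rfl fun n _ => tsum_wzF_sub n

theorem wzF_zero (k : ℕ) :
    wzF 0 k = 4 * doubleZetaTerm 3 5 k + 4 * doubleZetaTerm 7 1 k -
      3 * (1 / ((k : ℝ) + 1) ^ 8) := by
  have h : (k : ℝ) + 1 ≠ 0 := by positivity
  have hk : (k ! : ℝ) ≠ 0 := by positivity
  simp only [wzF, pertTerm, kernelPoly, BiDual.expCoeff, logδ, logq, logδq, doubleZetaTerm,
    mul_zero, zero_add, genHarmonic_zero, genHarmonic_succ, Nat.factorial_succ]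
  push_cast
  simp only [Nat.factorial_zero]
  field_simp
  ring

theorem tsum_wzF_zero : ∑' k, wzF 0 k = -4 * zeta53 - Real.pi ^ 8 / 4725 := by
  have h₈ : HasSum (fun k : ℕ => 1 / ((k : ℝ) + 1) ^ 8) (Real.pi ^ 8 / 9450) :=
    (summable_one_div_succ_pow (by norm_num)).hasSum_iff_tendsto_nat.2 tendsto_genHarmonic_eight
  have h := (((summable_doubleZetaTerm_of_three_le (s := 3) le_rfl 5).hasSum.mul_left 4).add
    ((summable_doubleZetaTerm_of_three_le (s := 7) (by norm_num) 1).hasSum.mul_left 4)).sub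
    (h₈.mul_left 3)
  rw [tsum_congr wzF_zero, h.tsum_eq]
  have h₅₃ : zeta53 = ∑' m, doubleZetaTerm 5 3 m := rfl
  have hodd := doubleZeta_odd_sum
  simp only [doubleZeta] at hodd
  linear_combination 4 * hodd + 4 * h₅₃

theorem risingFactorial_one (n : ℕ) : risingFactorial 1 n = n ! := by
  induction n with
  | zero => simp [risingFactorial]
  | succ n ih =>
    rw [risingFactorial, Finset.prod_range_succ, ← risingFactorial, ih, Nat.factorial_succ]
    push_cast
    ring

theorem risingFactorial_half (n : ℕ) :
    risingFactorial (1 / 2) n = ((2 * n)! : ℝ) / (4 ^ n * n !) := by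
  induction n with
  | zero => simp [risingFactorial]
  | succ n ih =>
    rw [risingFactorial, Finset.prod_range_succ, ← risingFactorial, ih,
      show 2 * (n + 1) = 2 * n + 1 + 1 by ring, Nat.factorial_succ, Nat.factorial_succ,
      Nat.factorial_succ]
    push_cast
    field_simp
    ring

theorem wzG_zero (n : ℕ) :
    wzG n 0 = (-1 / 2 ^ 10 : ℝ) ^ (n + 1) * (risingFactorial 1 (n + 1)) ^ 5 /
        (risingFactorial (1 / 2) (n + 1)) ^ 5 *
        ((351 - 1755 * ((n : ℝ) + 1) + 2240 * ((n : ℝ) + 1) ^ 2) / ((n : ℝ) + 1) ^ 10 -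
          (11 * genHarmonic 5 (n + 1) - genHarmonic 5 (2 * (n + 1))) *
            (205 * ((n : ℝ) + 1) ^ 2 - 160 * ((n : ℝ) + 1) + 32) / ((n : ℝ) + 1) ^ 5) := by
  have hn : (n : ℝ) + 1 ≠ 0 := by positivity
  have hf : (n ! : ℝ) ≠ 0 := by positivity
  have hd : ((2 * n + 2)! : ℝ) ≠ 0 := by positivity
  have hpow : (-1 / 2 ^ 10 : ℝ) ^ (n + 1) * ((4 : ℝ) ^ (n + 1)) ^ 5 = -(-1) ^ n := by
    rw [← pow_mul, mul_comm (n + 1) 5, pow_mul, ← mul_pow, pow_succ]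
    norm_num
  have hpre : (-1 / 2 ^ 10 : ℝ) ^ (n + 1) * (risingFactorial 1 (n + 1)) ^ 5 /
      (risingFactorial (1 / 2) (n + 1)) ^ 5 =
      -(-1) ^ n * ((n : ℝ) + 1) ^ 10 * (n ! : ℝ) ^ 10 / ((2 * n + 2)! : ℝ) ^ 5 := by
    rw [← hpow, risingFactorial_one, risingFactorial_half, show 2 * (n + 1) = 2 * n + 2 by ring,
      Nat.factorial_succ n]
    push_cast
    field_simp
  rw [hpre, wzG, pertTerm, show 2 * (n + 1) = 2 * n + 2 by ring, genHarmonic_succ 5 n]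
  simp only [certPoly, BiDual.expCoeff, logδ, logδq, add_zero]
  push_cast
  field_simp
  ring

/-- A fast-converging series for `ζ(5,3)`:
`∑_{n≥1} (−1/2^10)^n (1)ₙ^5/(1/2)ₙ^5
  [ (351−1755n+2240n²)/n^10 − (11 H_n^{(5)} − H_{2n}^{(5)})(205n²−160n+32)/n^5 ]
  = −4ζ(5,3) − π^8/4725`. -/
theorem zeta53_series :
    ∑' n : ℕ, ((-1 / 2 ^ 10 : ℝ) ^ (n + 1) * (risingFactorial 1 (n + 1)) ^ 5 /
        (risingFactorial (1 / 2) (n + 1)) ^ 5 *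
        ((351 - 1755 * ((n : ℝ) + 1) + 2240 * ((n : ℝ) + 1) ^ 2) / ((n : ℝ) + 1) ^ 10 -
          (11 * genHarmonic 5 (n + 1) - genHarmonic 5 (2 * (n + 1))) *
            (205 * ((n : ℝ) + 1) ^ 2 - 160 * ((n : ℝ) + 1) + 32) / ((n : ℝ) + 1) ^ 5))
      = -4 * zeta53 - Real.pi ^ 8 / 4725 := by
  rw [← tsum_wzF_zero, ← hasSum_wzG.tsum_eq]
  exact tsum_congr fun n => (wzG_zero n).symm
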